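/- For the unique-connection torsion absorption computation on V_4: if P_2 ∈ V_2 and one defines δP by requiring ⟨⟨P_2,ω⟩_2, ω⟩_1 = ⟨a_2 P_2, ⟨ω,ω⟩_3⟩_0 + ⟨b_2 P_2, ⟨ω,ω⟩_1⟩_2 identically in the V_4-valued 1-form ω, then necessarily a_2 = 3/10 and b_2 = 1/5. -/

import Mathlib

/-!
As an `SL₂`-module `Λ²V₄` is `V₆ ⊕ V₂`, with projections `⟨·,·⟩₁` and `⟨·,·⟩₃`. The highest weight
vector `x⁴ ∧ x³y` lies in `V₆`, so `⟨·,·⟩₃` kills it, and testing the identity on it, with `P₂ = y²`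
to keep the `V₆` term nonzero, determines `b` alone. The vector `x⁴ ∧ xy³` has a nonzero component
in `V₂`, so testing on it, with `P₂ = x²`, then determines `a`. A pairing of monomials is a scalar
times a monomial, which turns each test into an equation between coefficients of `x⁴`.
-/

open MvPolynomial

noncomputable section

abbrev P := MvPolynomial (Fin 2) ℝ

/-- partial derivative, as a plain function -/
def pd (i : Fin 2) (u : P) : P := MvPolynomial.pderiv i u

/-- The Clebsch-Gordan pairing of binary forms. -/
def CG (p : ℕ) (u v : P) : P :=
  ((p.factorial : ℝ)⁻¹) •
    ∑ k ∈ Finset.range (p + 1),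
      (((-1 : ℝ) ^ k * (p.choose k : ℝ)) •
        ((pd 0)^[p - k] ((pd 1)^[k] u) * (pd 0)^[k] ((pd 1)^[p - k] v)))

/-- The monomial `r xᵃ yᵇ`, with `x = X 0` and `y = X 1`, encoded as a linear map in `r` so that
sums and multiples of monomials of one bidegree combine through `map_add` and `map_smul`. -/
def binaryMonomial (a b : ℕ) : ℝ →ₗ[ℝ] P :=
  monomial (Finsupp.single 0 a + Finsupp.single 1 b)

/-- The structure constant of the pairing on monomials: the coefficient of `⟨xᵃ yᵇ, xᶜ yᵈ⟩_p`. -/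
def cgCoeff (p a b c d : ℕ) : ℝ :=
  (p.factorial : ℝ)⁻¹ *
    ∑ k ∈ Finset.range (p + 1),
      (-1 : ℝ) ^ k * p.choose k *
        (a.descFactorial (p - k) * b.descFactorial k *
          (c.descFactorial k * d.descFactorial (p - k)))

lemma binaryMonomial_injective (a b : ℕ) : Function.Injective (binaryMonomial a b) := by
  intro r s hrs
  rcases (monomial_eq_monomial_iff _ _ _ _).mp hrs with ⟨-, hrs⟩ | ⟨hr, hs⟩
  · exact hrs
  · rw [hr, hs]

lemma isHomogeneous_binaryMonomial (a b : ℕ) (r : ℝ) :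
    (binaryMonomial a b r).IsHomogeneous (a + b) :=
  isHomogeneous_monomial r (by simp)

lemma binaryMonomial_mul (a b c d : ℕ) (r s : ℝ) :
    binaryMonomial a b r * binaryMonomial c d s = binaryMonomial (a + c) (b + d) (r * s) := by
  simp only [binaryMonomial, monomial_mul, Finsupp.single_add, add_add_add_comm]

lemma iterate_pd_monomial (i : Fin 2) (k : ℕ) (s : Fin 2 →₀ ℕ) (r : ℝ) :
    (pd i)^[k] (monomial s r)
      = monomial (s - Finsupp.single i k) (r * (s i).descFactorial k) := by
  induction k with
  | zero => simp
  | succ k ih =>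
    rw [Function.iterate_succ_apply', ih, pd, pderiv_monomial, tsub_tsub, ← Finsupp.single_add,
      Finsupp.tsub_apply, Finsupp.single_eq_same, Nat.descFactorial_succ, Nat.cast_mul, mul_assoc,
      mul_comm ((s i).descFactorial k : ℝ)]

lemma iterate_pd_binaryMonomial (k l a b : ℕ) (r : ℝ) :
    (pd 0)^[k] ((pd 1)^[l] (binaryMonomial a b r))
      = binaryMonomial (a - k) (b - l) (r * (a.descFactorial k * b.descFactorial l)) := by
  have hexp : (Finsupp.single 0 a + Finsupp.single 1 b - Finsupp.single 1 l - Finsupp.single 0 k :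
      Fin 2 →₀ ℕ) = Finsupp.single 0 (a - k) + Finsupp.single 1 (b - l) := by
    ext i; fin_cases i <;> simp
  simp only [binaryMonomial, iterate_pd_monomial, hexp]
  congr 1
  simp [mul_comm, mul_left_comm]

-- The exponents match despite truncated subtraction: if `a < k`, then `a.descFactorial k = 0`.
lemma iterate_pd_binaryMonomial_mul {k l p : ℕ} (hkl : k + l = p) (a b c d : ℕ) (r s : ℝ) :
    (pd 0)^[k] ((pd 1)^[l] (binaryMonomial a b r)) * (pd 0)^[l] ((pd 1)^[k] (binaryMonomial c d s))
      = binaryMonomial (a + c - p) (b + d - p)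
          (r * s * (a.descFactorial k * b.descFactorial l *
            (c.descFactorial l * d.descFactorial k))) := by
  rw [iterate_pd_binaryMonomial, iterate_pd_binaryMonomial, binaryMonomial_mul, mul_mul_mul_comm]
  by_cases hle : (k ≤ a ∧ l ≤ b) ∧ l ≤ c ∧ k ≤ d
  · congr 2 <;> omega
  · have hzero : (a.descFactorial k * b.descFactorial l *
        (c.descFactorial l * d.descFactorial k) : ℝ) = 0 := by
      simp only [mul_eq_zero, Nat.cast_eq_zero, Nat.descFactorial_eq_zero_iff_lt]
      omega
    rw [hzero, mul_zero, map_zero, map_zero]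

lemma CG_binaryMonomial (p a b c d : ℕ) (r s : ℝ) :
    CG p (binaryMonomial a b r) (binaryMonomial c d s)
      = binaryMonomial (a + c - p) (b + d - p) (r * s * cgCoeff p a b c d) := by
  have hterm : ∀ k ∈ Finset.range (p + 1),
      ((-1 : ℝ) ^ k * p.choose k) • ((pd 0)^[p - k] ((pd 1)^[k] (binaryMonomial a b r)) *
          (pd 0)^[k] ((pd 1)^[p - k] (binaryMonomial c d s)))
        = binaryMonomial (a + c - p) (b + d - p) (((-1 : ℝ) ^ k * p.choose k) •
            (r * s * (a.descFactorial (p - k) * b.descFactorial k *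
              (c.descFactorial k * d.descFactorial (p - k))))) := fun k hk => by
    rw [iterate_pd_binaryMonomial_mul (Nat.sub_add_cancel (Finset.mem_range_succ_iff.mp hk)),
      map_smul]
  rw [CG, Finset.sum_congr rfl hterm, ← map_sum, ← map_smul]
  congr 1
  simp only [cgCoeff, smul_eq_mul, Finset.mul_sum]
  exact Finset.sum_congr rfl fun k _ => by ring

lemma cgCoeff_eq_zero {p b d : ℕ} (hbd : b + d < p) (a c : ℕ) : cgCoeff p a b c d = 0 := by
  refine mul_eq_zero_of_right _ (Finset.sum_eq_zero fun k _ => ?_)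
  have hzero : b.descFactorial k = 0 ∨ d.descFactorial (p - k) = 0 := by
    simp only [Nat.descFactorial_eq_zero_iff_lt]
    omega
  rcases hzero with hb | hd
  · simp [hb]
  · simp [hd]

lemma CG_zero (u v : P) : CG 0 u v = u * v := by
  simp [CG]

/-- The 2-form `⟨ω,ω⟩_p`, polarized: its value when `ω` takes the values `u` and `v`. -/
def skewCG (p : ℕ) (u v : P) : P :=
  CG p u v - CG p v u

/-- The torsion term `⟨⟨Q,ω⟩₂,ω⟩₁`, polarized as in `skewCG`. -/
def skewTorsion (Q u v : P) : P :=
  CG 1 (CG 2 Q u) v - CG 1 (CG 2 Q v) u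

lemma skewCG_binaryMonomial (p a b c d : ℕ) (r s : ℝ) :
    skewCG p (binaryMonomial a b r) (binaryMonomial c d s)
      = binaryMonomial (a + c - p) (b + d - p)
          (r * s * (cgCoeff p a b c d - cgCoeff p c d a b)) := by
  rw [skewCG, CG_binaryMonomial, CG_binaryMonomial, add_comm c a, add_comm d b, mul_comm s r,
    ← map_sub, mul_sub]

lemma skewCG_binaryMonomial_eq_zero {p b d : ℕ} (hbd : b + d < p) (a c : ℕ) (r s : ℝ) :
    skewCG p (binaryMonomial a b r) (binaryMonomial c d s) = 0 := by
  rw [skewCG_binaryMonomial, cgCoeff_eq_zero hbd, cgCoeff_eq_zero (add_comm b d ▸ hbd), sub_zero,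
    mul_zero, map_zero]

lemma skewTorsion_y2_x4_x3y :
    skewTorsion (binaryMonomial 0 2 1) (binaryMonomial 4 0 1) (binaryMonomial 3 1 1)
      = binaryMonomial 4 0 48 := by
  simp only [skewTorsion, CG_binaryMonomial]
  norm_num [cgCoeff, Finset.sum_range_succ, Nat.descFactorial, ← map_add]

lemma skewCG_one_x4_x3y :
    skewCG 1 (binaryMonomial 4 0 1) (binaryMonomial 3 1 1) = binaryMonomial 6 0 8 := by
  norm_num [skewCG_binaryMonomial, cgCoeff, Finset.sum_range_succ, Nat.descFactorial]

lemma CG_two_y2_x6 (r : ℝ) :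
    CG 2 (binaryMonomial 0 2 1) (binaryMonomial 6 0 r) = binaryMonomial 4 0 (r * 30) := by
  norm_num [CG_binaryMonomial, cgCoeff, Finset.sum_range_succ, Nat.descFactorial]

lemma skewTorsion_x2_x4_xy3 :
    skewTorsion (binaryMonomial 2 0 1) (binaryMonomial 4 0 1) (binaryMonomial 1 3 1)
      = binaryMonomial 4 0 24 := by
  simp only [skewTorsion, CG_binaryMonomial]
  norm_num [cgCoeff, Finset.sum_range_succ, Nat.descFactorial]

lemma skewCG_three_x4_xy3 :
    skewCG 3 (binaryMonomial 4 0 1) (binaryMonomial 1 3 1) = binaryMonomial 2 0 48 := by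
  norm_num [skewCG_binaryMonomial, cgCoeff, Finset.sum_range_succ, Nat.descFactorial,
    Nat.factorial]

lemma skewCG_one_x4_xy3 :
    skewCG 1 (binaryMonomial 4 0 1) (binaryMonomial 1 3 1) = binaryMonomial 4 2 24 := by
  norm_num [skewCG_binaryMonomial, cgCoeff, Finset.sum_range_succ, Nat.descFactorial]

lemma CG_two_x2_x4y2 (r : ℝ) :
    CG 2 (binaryMonomial 2 0 1) (binaryMonomial 4 2 r) = binaryMonomial 4 0 (r * 2) := by
  norm_num [CG_binaryMonomial, cgCoeff, Finset.sum_range_succ, Nat.descFactorial]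

/-- if the identity
⟨⟨P₂,ω⟩₂,ω⟩₁ = ⟨a P₂,⟨ω,ω⟩₃⟩₀ + ⟨b P₂,⟨ω,ω⟩₁⟩₂
holds identically for a V₄-valued 1-form ω (stated here in polarized form on
components u, v ∈ V₄), then necessarily a = 3/10 and b = 1/5. -/
theorem skewing_constants_a2_b2 (a b : ℝ)
    (h : ∀ P2 u v : P, P2.IsHomogeneous 2 → u.IsHomogeneous 4 → v.IsHomogeneous 4 →
      CG 1 (CG 2 P2 u) v - CG 1 (CG 2 P2 v) u
        = a • CG 0 P2 (CG 3 u v - CG 3 v u) + b • CG 2 P2 (CG 1 u v - CG 1 v u)) :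
    a = 3 / 10 ∧ b = 1 / 5 := by
  have htest (Q u v : P) (hQ : Q.IsHomogeneous 2) (hu : u.IsHomogeneous 4)
      (hv : v.IsHomogeneous 4) :
      skewTorsion Q u v = a • CG 0 Q (skewCG 3 u v) + b • CG 2 Q (skewCG 1 u v) :=
    h Q u v hQ hu hv
  have hx4 := isHomogeneous_binaryMonomial 4 0 1
  have hV6 : 48 = b * (8 * 30) := by
    have hx4_x3y := htest _ _ _ (isHomogeneous_binaryMonomial 0 2 1) hx4
      (isHomogeneous_binaryMonomial 3 1 1)
    rw [skewTorsion_y2_x4_x3y, skewCG_binaryMonomial_eq_zero (by norm_num), CG_zero, mul_zero,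
      smul_zero, zero_add, skewCG_one_x4_x3y, CG_two_y2_x6, ← map_smul] at hx4_x3y
    exact binaryMonomial_injective 4 0 hx4_x3y
  have hV2 : 24 = a * (1 * 48) + b * (24 * 2) := by
    have hx4_xy3 := htest _ _ _ (isHomogeneous_binaryMonomial 2 0 1) hx4
      (isHomogeneous_binaryMonomial 1 3 1)
    rw [skewTorsion_x2_x4_xy3, skewCG_three_x4_xy3, CG_zero, binaryMonomial_mul,
      skewCG_one_x4_xy3, CG_two_x2_x4y2, ← map_smul, ← map_smul, ← map_add] at hx4_xy3
    exact binaryMonomial_injective 4 0 hx4_xy3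
  constructor <;> linarith
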